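/- Let h : I → ℂ be a holomorphic function on an open set I ⊆ ℂ and z ∈ ℂ. The slope field s(x, y) = −e^y / (e^y·h(x) + z), defined on the open set of (x, y) ∈ I × ℂ where e^y·h(x) + z ≠ 0, satisfies ∂s/∂x + s·∂s/∂y = (1 + h'(x))·s² + h(x)·s³ at every point of its domain. Hence the pencil of foliations ω_z = e^y(dx + h(x)dy) + z·dy, z ∈ ℙ¹, is a pencil of geodesic foliations for the projective structure y'' = (1 + h'(x))(y')² + h(x)(y')³. -/

import Mathlib

/-!
The slope field `s = -E(y) / (E(y) h(x) + z)`, with `E' = E`, solves the Riccati-type equations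
`∂s/∂x = h' s²` and `∂s/∂y = s + h s²`, in which the parameter `z` no longer appears. Hence
`∂s/∂x + s ∂s/∂y = (1 + h') s² + h s³` for every `z`.
-/

section

variable {𝕜 : Type*} [NontriviallyNormedField 𝕜]

/-- The foliation `dy/dx = g(x, y)` is geodesic at `(x, y)` for the equation `y'' = F(x, y, y')`:
`g` has both partial derivatives there and `∂g/∂x + g ∂g/∂y = F(x, y, g)`. A projective structure
is the case in which `F` is a polynomial of degree at most three in its last argument. -/
def IsGeodesicSlopeAt (F : 𝕜 → 𝕜 → 𝕜 → 𝕜) (g : 𝕜 → 𝕜 → 𝕜) (x y : 𝕜) : Prop :=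
  ∃ gx gy : 𝕜, HasDerivAt (fun x' ↦ g x' y) gx x ∧ HasDerivAt (fun y' ↦ g x y') gy y ∧
    gx + g x y * gy = F x y (g x y)

/-- The slope `dy/dx` of the foliation defined by the 1-form `E(y) (dx + h(x) dy) + z dy`, the
member of parameter `z` of a pencil. It takes the junk value `0` where the coefficient
`E(y) h(x) + z` of `dy` vanishes. -/
def pencilSlope (E h : 𝕜 → 𝕜) (z x y : 𝕜) : 𝕜 :=
  -E y / (E y * h x + z)

variable {E h : 𝕜 → 𝕜} {x y z : 𝕜}

theorem hasDerivAt_pencilSlope_fst {dh : 𝕜} (hh : HasDerivAt h dh x) (hD : E y * h x + z ≠ 0) :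
    HasDerivAt (fun x' ↦ pencilSlope E h z x' y) (dh * pencilSlope E h z x y ^ 2) x := by
  have hdenom : HasDerivAt (fun x' ↦ E y * h x' + z) (E y * dh) x :=
    (hh.const_mul (E y)).add_const z
  refine ((hasDerivAt_const x (-E y)).fun_div hdenom hD).congr_deriv ?_
  rw [pencilSlope]
  field_simp
  ring

theorem hasDerivAt_pencilSlope_snd (hE : HasDerivAt E (E y) y) (hD : E y * h x + z ≠ 0) :
    HasDerivAt (fun y' ↦ pencilSlope E h z x y')
      (pencilSlope E h z x y + h x * pencilSlope E h z x y ^ 2) y := by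
  have hdenom : HasDerivAt (fun y' ↦ E y' * h x + z) (E y * h x) y :=
    (hE.mul_const (h x)).add_const z
  refine (hE.fun_neg.fun_div hdenom hD).congr_deriv ?_
  rw [pencilSlope]
  field_simp
  ring

theorem flat_pencil_geodesic_ia1_general {h' : 𝕜 → 𝕜} (hh : HasDerivAt h (h' x) x)
    (hE : HasDerivAt E (E y) y) (hD : E y * h x + z ≠ 0) :
    IsGeodesicSlopeAt (fun x _ p ↦ (1 + h' x) * p ^ 2 + h x * p ^ 3) (pencilSlope E h z) x y :=
  ⟨_, _, hasDerivAt_pencilSlope_fst hh hD, hasDerivAt_pencilSlope_snd hE hD, by ring⟩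

end

/-- Let `h` be holomorphic on an open set `I ⊆ ℂ` with derivative `h'`. The
slope field `s(x,y) = −e^y/(e^y h(x) + z)` satisfies
`∂s/∂x + s∂s/∂y = (1 + h'(x))s² + h(x)s³` wherever `e^y h(x) + z ≠ 0`:
the pencil `ω_z = e^y(dx + h(x)dy) + z dy` is geodesic for the projective
structure `y'' = (1 + h'(x))(y')² + h(x)(y')³`. -/
theorem flat_pencil_geodesic_ia1 (I : Set ℂ) (hI : IsOpen I)
    (h h' : ℂ → ℂ) (hh : ∀ x ∈ I, HasDerivAt h (h' x) x) (z : ℂ) :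
    ∀ x ∈ I, ∀ y : ℂ, Complex.exp y * h x + z ≠ 0 →
      ∃ sx sy : ℂ,
        HasDerivAt (fun x' : ℂ =>
          -Complex.exp y / (Complex.exp y * h x' + z)) sx x ∧
        HasDerivAt (fun y' : ℂ =>
          -Complex.exp y' / (Complex.exp y' * h x + z)) sy y ∧
        sx + (-Complex.exp y / (Complex.exp y * h x + z)) * sy =
          (1 + h' x) * (-Complex.exp y / (Complex.exp y * h x + z)) ^ 2 +
            h x * (-Complex.exp y / (Complex.exp y * h x + z)) ^ 3 :=
  fun _ hx y hD ↦ flat_pencil_geodesic_ia1_general (hh _ hx) (Complex.hasDerivAt_exp y) hD
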